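/- arXiv:1906.01171 — 3 statements merged into one kernel-verified Lean document; each statement's English description precedes it below -/
import Mathlib

section
/- Let ε > 0, d ≥ 1, Δ > 0 and λ₁, λ₂ ∈ (0,1). If λ₁ > 1/(1+Δ)^d and λ₁ < 1 − e^{−ε}, then the joint measures satisfy KL(Q ‖ P) ≤ ε. -/
open MeasureTheory ProbabilityTheory
open scoped ENNReal

noncomputable section

/-- The closed annulus `{x : a ≤ ‖x‖ ≤ b}` in `ℝ^d` (Euclidean norm). -/
def annulus (d : ℕ) (a b : ℝ) : Set (EuclideanSpace ℝ (Fin d)) :=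
  {x | a ≤ ‖x‖ ∧ ‖x‖ ≤ b}

/-- The uniform probability measure on the annulus `A_d(a,b)`:
Lebesgue measure restricted to the annulus and normalized. -/
def U (d : ℕ) (a b : ℝ) : Measure (EuclideanSpace ℝ (Fin d)) :=
  (volume (annulus d a b))⁻¹ • volume.restrict (annulus d a b)

/-- `C_d`, the Lebesgue volume of the unit ball in `ℝ^d`. -/
def Cd (d : ℕ) : ℝ :=
  (volume (Metric.closedBall (0 : EuclideanSpace ℝ (Fin d)) 1)).toReal

open Classical in
/-- Kullback–Leibler divergence: `∫ log (dμ/dν) dμ` if `μ ≪ ν`, and `+∞` otherwise. -/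
def klDiv {X : Type*} [MeasurableSpace X] (μ ν : Measure X) : EReal :=
  if μ ≪ ν then ((∫ x, Real.log (μ.rnDeriv ν x).toReal ∂μ : ℝ) : EReal) else ⊤

/-- `P₀ = λ₁·U_d(0,1) + (1−λ₁)·U_d(1,1+Δ)`. -/
def P0 (d : ℕ) (Δ l1 : ℝ) : Measure (EuclideanSpace ℝ (Fin d)) :=
  ENNReal.ofReal l1 • U d 0 1 + ENNReal.ofReal (1 - l1) • U d 1 (1 + Δ)

/-- `P₁ = λ₂·U_d(0,1) + (1−λ₂)·U_d(2,3)`. -/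
def P1 (d : ℕ) (l2 : ℝ) : Measure (EuclideanSpace ℝ (Fin d)) :=
  ENNReal.ofReal l2 • U d 0 1 + ENNReal.ofReal (1 - l2) • U d 2 3

/-- `Q₀ = U_d(0,1+Δ)`. -/
def Q0 (d : ℕ) (Δ : ℝ) : Measure (EuclideanSpace ℝ (Fin d)) :=
  U d 0 (1 + Δ)

/-- Joint measure on `ℝ^d × {0,1}` with uniform class prior. -/
def joint (d : ℕ) (μ0 μ1 : Measure (EuclideanSpace ℝ (Fin d))) :
    Measure (EuclideanSpace ℝ (Fin d) × Fin 2) :=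
  (1/2 : ℝ≥0∞) • μ0.map (fun x => (x, 0)) + (1/2 : ℝ≥0∞) • μ1.map (fun x => (x, 1))

/-- Real-valued density of `μ` with respect to Lebesgue measure. -/
def f (d : ℕ) (μ : Measure (EuclideanSpace ℝ (Fin d))) (x : EuclideanSpace ℝ (Fin d)) : ℝ :=
  (μ.rnDeriv volume x).toReal

lemma annulus_zero_left (d : ℕ) (b : ℝ) :
    annulus d 0 b = Metric.closedBall 0 b := by
  ext x
  simp [annulus]

lemma U_univ_le_one (d : ℕ) (a b : ℝ) : U d a b Set.univ ≤ 1 := by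
  simp [U]

lemma mixture_univ_le_one {X : Type*} [MeasurableSpace X] {μ ν : Measure X} {t : ℝ}
    (ht : t ∈ Set.Ioo (0 : ℝ) 1) (hμ : μ Set.univ ≤ 1) (hν : ν Set.univ ≤ 1) :
    (ENNReal.ofReal t • μ + ENNReal.ofReal (1 - t) • ν) Set.univ ≤ 1 := by
  calc (ENNReal.ofReal t • μ + ENNReal.ofReal (1 - t) • ν) Set.univ
      = ENNReal.ofReal t * μ Set.univ + ENNReal.ofReal (1 - t) * ν Set.univ := by simp
    _ ≤ ENNReal.ofReal t * 1 + ENNReal.ofReal (1 - t) * 1 := by gcongr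
    _ = 1 := by
      rw [mul_one, mul_one, ← ENNReal.ofReal_add ht.1.le (by linarith [ht.2])]
      simp

lemma joint_univ_le_one {d : ℕ} {μ0 μ1 : Measure (EuclideanSpace ℝ (Fin d))}
    (h0 : μ0 Set.univ ≤ 1) (h1 : μ1 Set.univ ≤ 1) : joint d μ0 μ1 Set.univ ≤ 1 := by
  have e : joint d μ0 μ1 Set.univ = 1 / 2 * μ0 Set.univ + 1 / 2 * μ1 Set.univ := by
    simp only [joint, Measure.add_apply, Measure.smul_apply, smul_eq_mul]
    rw [Measure.map_apply (by fun_prop) .univ, Measure.map_apply (by fun_prop) .univ]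
    simp
  calc joint d μ0 μ1 Set.univ = 1 / 2 * μ0 Set.univ + 1 / 2 * μ1 Set.univ := e
    _ ≤ 1 / 2 * 1 + 1 / 2 * 1 := by gcongr
    _ = 1 := by simp [ENNReal.inv_two_add_inv_two]

lemma joint_le_smul_joint {d : ℕ} {c : ℝ≥0∞} {μ0 μ1 ν0 ν1 : Measure (EuclideanSpace ℝ (Fin d))}
    (h0 : μ0 ≤ c • ν0) (h1 : μ1 ≤ c • ν1) : joint d μ0 μ1 ≤ c • joint d ν0 ν1 := by
  have key : c • joint d ν0 ν1 = joint d (c • ν0) (c • ν1) := by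
    simp only [joint, Measure.map_smul, smul_add, smul_smul, mul_comm]
  rw [key]
  unfold joint
  gcongr <;> fun_prop

/-- A measure of mass at most one dominated by `exp ε • ν` has divergence at most `ε` from `ν`. -/
lemma klDiv_le_of_le_smul {X : Type*} [MeasurableSpace X] {μ ν : Measure X}
    [IsFiniteMeasure ν] {ε : ℝ} (hε : 0 ≤ ε) (hμ : μ Set.univ ≤ 1)
    (h : μ ≤ ENNReal.ofReal (Real.exp ε) • ν) : klDiv μ ν ≤ (ε : EReal) := by
  have : IsFiniteMeasure μ := ⟨hμ.trans_lt ENNReal.one_lt_top⟩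
  have hc : ENNReal.ofReal (Real.exp ε) ≠ 0 := by simp [Real.exp_pos]
  have hac : μ ≪ ν :=
    (Measure.absolutelyContinuous_of_le h).trans Measure.smul_absolutelyContinuous
  have hfin : IsFiniteMeasure (ENNReal.ofReal (Real.exp ε) • ν) :=
    Measure.smul_finite _ ENNReal.ofReal_ne_top
  have hle : ∀ᵐ x ∂μ, Real.log (μ.rnDeriv ν x).toReal ≤ ε := by
    have hsmul := hac.ae_le
      (Measure.rnDeriv_smul_right_of_ne_top μ ν hc ENNReal.ofReal_ne_top)
    have hone := (Measure.absolutelyContinuous_of_le h).ae_le (Measure.rnDeriv_le_one_of_le h)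
    filter_upwards [hsmul, hone] with x hx hx1
    rw [hx, Pi.smul_apply, smul_eq_mul] at hx1
    have hb : μ.rnDeriv ν x ≤ ENNReal.ofReal (Real.exp ε) := by
      simpa [mul_comm, ← div_eq_mul_inv] using
        (ENNReal.inv_mul_le_iff hc ENNReal.ofReal_ne_top).1 hx1
    have hr : (μ.rnDeriv ν x).toReal ≤ Real.exp ε :=
      ENNReal.toReal_le_of_le_ofReal (Real.exp_pos ε).le hb
    rcases (ENNReal.toReal_nonneg (a := μ.rnDeriv ν x)).eq_or_lt with h0 | h0
    · simpa [← h0] using hε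
    · exact (Real.log_le_iff_le_exp h0).2 hr
  rw [klDiv, if_pos hac, EReal.coe_le_coe_iff]
  by_cases hint : Integrable (fun x => Real.log (μ.rnDeriv ν x).toReal) μ
  · calc ∫ x, Real.log (μ.rnDeriv ν x).toReal ∂μ ≤ ∫ _, ε ∂μ :=
          integral_mono_ae hint (integrable_const _) hle
      _ = μ.real Set.univ * ε := by simp
      _ ≤ 1 * ε := by
        gcongr
        exact ENNReal.toReal_le_of_le_ofReal zero_le_one (by simpa using hμ)
      _ = ε := one_mul ε
  · rwa [integral_undef hint]

lemma Q0_le_smul_P0 {d : ℕ} {Δ l c : ℝ} (hΔ : 0 < Δ) (hl : l ∈ Set.Ioo (0 : ℝ) 1)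
    (hc : 1 ≤ c) (h1 : 1 ≤ l * (1 + Δ) ^ d) (h2 : 1 ≤ c * (1 - l)) :
    Q0 d Δ ≤ ENNReal.ofReal c • P0 d Δ l := by
  have hc0 : 0 ≤ c := zero_le_one.trans hc
  have hl0 : 0 ≤ l := hl.1.le
  set V := volume (annulus d 0 (1 + Δ)) with hV
  have hVball : V = ENNReal.ofReal ((1 + Δ) ^ d) * volume (annulus d 0 1) := by
    rw [hV, annulus_zero_left, annulus_zero_left,
      Measure.addHaar_closedBall' _ _ (by positivity), finrank_euclideanSpace_fin]
  have hsub : annulus d 1 (1 + Δ) ⊆ annulus d 0 (1 + Δ) :=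
    fun x hx => ⟨norm_nonneg x, hx.2⟩
  have hunion : annulus d 0 (1 + Δ) ⊆ annulus d 0 1 ∪ annulus d 1 (1 + Δ) := by
    intro x hx
    rcases le_total ‖x‖ 1 with h | h
    · exact Or.inl ⟨hx.1, h⟩
    · exact Or.inr ⟨h, hx.2⟩
  have hinner : V⁻¹ ≤ ENNReal.ofReal (c * l) * (volume (annulus d 0 1))⁻¹ := by
    have hpow : 0 < (1 + Δ) ^ d := by positivity
    rw [hVball, ENNReal.mul_inv (by simp [hpow]) (by simp), ← ENNReal.ofReal_inv_of_pos hpow]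
    gcongr
    rw [inv_le_iff_one_le_mul₀ hpow, mul_assoc]
    nlinarith
  have houter : V⁻¹ ≤ ENNReal.ofReal (c * (1 - l)) * (volume (annulus d 1 (1 + Δ)))⁻¹ :=
    calc V⁻¹ = 1 * V⁻¹ := (one_mul _).symm
      _ ≤ ENNReal.ofReal (c * (1 - l)) * (volume (annulus d 1 (1 + Δ)))⁻¹ := by
        gcongr
        · simpa using h2
        · exact measure_mono hsub
  calc Q0 d Δ = V⁻¹ • volume.restrict (annulus d 0 (1 + Δ)) := rfl
    _ ≤ V⁻¹ • (volume.restrict (annulus d 0 1) + volume.restrict (annulus d 1 (1 + Δ))) := by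
      gcongr
      exact (Measure.restrict_mono hunion le_rfl).trans (Measure.restrict_union_le _ _)
    _ ≤ (ENNReal.ofReal (c * l) * (volume (annulus d 0 1))⁻¹) • volume.restrict (annulus d 0 1) +
        (ENNReal.ofReal (c * (1 - l)) * (volume (annulus d 1 (1 + Δ)))⁻¹) •
          volume.restrict (annulus d 1 (1 + Δ)) := by
      rw [smul_add]
      gcongr
    _ = ENNReal.ofReal c • P0 d Δ l := by
      simp only [P0, U, smul_add, smul_smul, ENNReal.ofReal_mul hc0, mul_assoc]

/-- if `λ₁ > 1/(1+Δ)^d` and `λ₁ < 1 − e^{−ε}` then `KL(Q ‖ P) ≤ ε`. -/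
theorem stmt5 (ε : ℝ) (hε : 0 < ε) (d : ℕ) (hd : 1 ≤ d) (Δ l1 l2 : ℝ) (hΔ : 0 < Δ)
    (hl1 : l1 ∈ Set.Ioo (0:ℝ) 1) (hl2 : l2 ∈ Set.Ioo (0:ℝ) 1)
    (h1 : 1 / (1 + Δ) ^ d < l1) (h2 : l1 < 1 - Real.exp (-ε)) :
    klDiv (joint d (Q0 d Δ) (P1 d l2)) (joint d (P0 d Δ l1) (P1 d l2)) ≤ (ε : EReal) := by

  have hc : 1 ≤ Real.exp ε := Real.one_le_exp hε.le
  have hpow : 1 ≤ l1 * (1 + Δ) ^ d := ((div_lt_iff₀ (by positivity)).1 h1).le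
  have hexp : 1 ≤ Real.exp ε * (1 - l1) := by
    calc (1 : ℝ) = Real.exp ε * Real.exp (-ε) := by rw [← Real.exp_add]; simp
      _ ≤ Real.exp ε * (1 - l1) := by gcongr; linarith
  have hP1 : P1 d l2 Set.univ ≤ 1 :=
    mixture_univ_le_one hl2 (U_univ_le_one _ _ _) (U_univ_le_one _ _ _)
  have hP0 : P0 d Δ l1 Set.univ ≤ 1 :=
    mixture_univ_le_one hl1 (U_univ_le_one _ _ _) (U_univ_le_one _ _ _)
  have : IsFiniteMeasure (joint d (P0 d Δ l1) (P1 d l2)) :=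
    ⟨(joint_univ_le_one hP0 hP1).trans_lt ENNReal.one_lt_top⟩
  refine klDiv_le_of_le_smul hε.le (joint_univ_le_one (U_univ_le_one _ _ _) hP1)
    (joint_le_smul_joint (Q0_le_smul_P0 hΔ hl1 hc hpow hexp) ?_)
  calc P1 d l2 = (1 : ℝ≥0∞) • P1 d l2 := (one_smul _ _).symm
    _ ≤ ENNReal.ofReal (Real.exp ε) • P1 d l2 := by
      gcongr
      simpa using hc
end
end

section
/- Let ε > 0, d ≥ 1, Δ > 0 and λ₁, λ₂ ∈ (0,1). If λ₁ > 1/(1+Δ)^d and λ₁ < ε/(d·log(1+Δ)), then the joint measures satisfy KL(P ‖ Q) ≤ ε. -/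
open MeasureTheory ProbabilityTheory
open scoped ENNReal

noncomputable section

lemma annulus_eq_diff (d : ℕ) (a b : ℝ) :
    annulus d a b = Metric.closedBall 0 b \ Metric.ball 0 a := by
  ext x
  simp [annulus, and_comm]

lemma measurableSet_annulus (d : ℕ) (a b : ℝ) : MeasurableSet (annulus d a b) := by
  rw [annulus_eq_diff]
  exact Metric.isClosed_closedBall.measurableSet.diff Metric.isOpen_ball.measurableSet

lemma volume_annulus {d : ℕ} (hd : 1 ≤ d) {a b : ℝ} (ha : 0 ≤ a) (hab : a ≤ b) :
    volume (annulus d a b) = ENNReal.ofReal (b ^ d - a ^ d) *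
      volume (Metric.ball (0 : EuclideanSpace ℝ (Fin d)) 1) := by
  have : Nonempty (Fin d) := ⟨⟨0, hd⟩⟩
  rw [annulus_eq_diff, measure_sdiff
      (Metric.ball_subset_closedBall.trans (Metric.closedBall_subset_closedBall hab))
      Metric.isOpen_ball.measurableSet.nullMeasurableSet measure_ball_lt_top.ne,
    Measure.addHaar_closedBall _ _ (ha.trans hab), Measure.addHaar_ball _ _ ha,
    finrank_euclideanSpace_fin, ENNReal.ofReal_sub _ (by positivity), ENNReal.sub_mul]
  intros
  exact measure_ball_lt_top.ne

instance (d : ℕ) (a b : ℝ) : IsFiniteMeasure (U d a b) :=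
  ⟨(U_univ_le_one d a b).trans_lt ENNReal.one_lt_top⟩

instance (d : ℕ) (Δ : ℝ) : IsFiniteMeasure (Q0 d Δ) := by
  unfold Q0
  infer_instance

instance (d : ℕ) (l2 : ℝ) : IsFiniteMeasure (P1 d l2) := by
  have h₁ := Measure.smul_finite (U d 0 1) (c := ENNReal.ofReal l2) ENNReal.ofReal_ne_top
  have h₂ := Measure.smul_finite (U d 2 3) (c := ENNReal.ofReal (1 - l2)) ENNReal.ofReal_ne_top
  unfold P1
  infer_instance

instance (d : ℕ) (μ0 μ1 : Measure (EuclideanSpace ℝ (Fin d))) [IsFiniteMeasure μ0]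
    [IsFiniteMeasure μ1] : IsFiniteMeasure (joint d μ0 μ1) := by
  have h₁ := Measure.smul_finite (μ0.map (fun x => (x, (0 : Fin 2)))) (c := 1 / 2) (by simp)
  have h₂ := Measure.smul_finite (μ1.map (fun x => (x, (1 : Fin 2)))) (c := 1 / 2) (by simp)
  unfold joint
  infer_instance

/-- Reweighting only the class-`0` part of a joint measure reweights its class-`0` conditional. -/
lemma joint_withDensity (d : ℕ) (μ0 μ1 : Measure (EuclideanSpace ℝ (Fin d)))
    {g : EuclideanSpace ℝ (Fin d) → ℝ≥0∞} (hg : Measurable g) :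
    (joint d μ0 μ1).withDensity (fun p => if p.2 = 0 then g p.1 else 1) =
      joint d (μ0.withDensity g) μ1 := by
  have hm : Measurable
      (fun p : EuclideanSpace ℝ (Fin d) × Fin 2 => if p.2 = 0 then g p.1 else 1) :=
    Measurable.ite (measurable_snd (measurableSet_singleton 0)) (hg.comp measurable_fst)
      measurable_const
  ext s hs
  have h0 : MeasurableSet ((fun x : EuclideanSpace ℝ (Fin d) => (x, (0 : Fin 2))) ⁻¹' s) :=
    (by fun_prop : Measurable fun x : EuclideanSpace ℝ (Fin d) => (x, (0 : Fin 2))) hs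
  have h1 : MeasurableSet ((fun x : EuclideanSpace ℝ (Fin d) => (x, (1 : Fin 2))) ⁻¹' s) :=
    (by fun_prop : Measurable fun x : EuclideanSpace ℝ (Fin d) => (x, (1 : Fin 2))) hs
  rw [withDensity_apply _ hs, joint, joint, Measure.restrict_add, lintegral_add_measure,
    Measure.restrict_smul, Measure.restrict_smul, lintegral_smul_measure, lintegral_smul_measure,
    setLIntegral_map hs hm (by fun_prop), setLIntegral_map hs hm (by fun_prop)]
  simp only [Measure.add_apply, Measure.smul_apply]
  rw [Measure.map_apply (by fun_prop) hs, Measure.map_apply (by fun_prop) hs,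
    withDensity_apply _ h0]
  simp

lemma U_zero_one_eq {d : ℕ} (hd : 1 ≤ d) :
    U d 0 1 = (volume (Metric.ball (0 : EuclideanSpace ℝ (Fin d)) 1))⁻¹ •
      volume.restrict (Metric.ball (0 : EuclideanSpace ℝ (Fin d)) 1) := by
  have h : annulus d 0 1 = Metric.closedBall 0 1 := by simp [annulus_eq_diff]
  have hv := volume_annulus hd le_rfl zero_le_one
  rw [zero_pow (by omega), one_pow, sub_zero, ENNReal.ofReal_one, one_mul] at hv
  rw [U, hv, h]
  congr 1
  refine (Measure.restrict_congr_set (ae_eq_of_subset_of_measure_ge Metric.ball_subset_closedBall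
    ?_ Metric.isOpen_ball.measurableSet.nullMeasurableSet measure_closedBall_lt_top.ne)).symm
  rw [← h, hv]

/-- The density of `P₀` with respect to `Q₀`. -/
def densP0 (d : ℕ) (Δ l1 : ℝ) (x : EuclideanSpace ℝ (Fin d)) : ℝ≥0∞ :=
  if ‖x‖ < 1 then ENNReal.ofReal (l1 * (1 + Δ) ^ d)
  else ENNReal.ofReal ((1 - l1) * (1 + Δ) ^ d / ((1 + Δ) ^ d - 1))

lemma measurable_densP0 (d : ℕ) (Δ l1 : ℝ) : Measurable (densP0 d Δ l1) :=
  Measurable.ite (measurableSet_lt measurable_norm measurable_const) measurable_const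
    measurable_const

lemma withDensity_restrict_eq_smul {X : Type*} [MeasurableSpace X] (μ : Measure X) {s : Set X}
    (hs : MeasurableSet s) {g : X → ℝ≥0∞} {c : ℝ≥0∞} (h : ∀ x ∈ s, g x = c) :
    (μ.restrict s).withDensity g = c • μ.restrict s := by
  rw [← withDensity_const]
  exact withDensity_congr_ae ((ae_restrict_iff' hs).2 (.of_forall h))

lemma Q0_withDensity {d : ℕ} (hd : 1 ≤ d) {Δ l1 : ℝ} (hΔ : 0 < Δ) (hl1 : l1 ∈ Set.Ioo (0:ℝ) 1) :
    (Q0 d Δ).withDensity (densP0 d Δ l1) = P0 d Δ l1 := by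
  have hV : 1 < (1 + Δ) ^ d := one_lt_pow₀ (by linarith) (by omega)
  have hunion : annulus d 0 (1 + Δ) = Metric.ball 0 1 ∪ annulus d 1 (1 + Δ) := by
    ext x
    simp only [annulus, Set.mem_ofPred_eq, norm_nonneg, true_and, Set.mem_union, mem_ball_zero_iff]
    constructor
    · intro h
      exact (lt_or_ge ‖x‖ 1).imp id fun h' => ⟨h', h⟩
    · rintro (h | h) <;> linarith
  have hdisj : Disjoint (Metric.ball 0 1) (annulus d 1 (1 + Δ)) := by
    rw [annulus_eq_diff]
    exact Set.disjoint_sdiff_right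
  have hb : ∀ x ∈ Metric.ball (0 : EuclideanSpace ℝ (Fin d)) 1,
      densP0 d Δ l1 x = ENNReal.ofReal (l1 * (1 + Δ) ^ d) := fun x hx => by
    rw [mem_ball_zero_iff] at hx
    simp [densP0, hx]
  have ha : ∀ x ∈ annulus d 1 (1 + Δ), densP0 d Δ l1 x =
      ENNReal.ofReal ((1 - l1) * (1 + Δ) ^ d / ((1 + Δ) ^ d - 1)) := fun x hx => by
    simp [densP0, not_lt.2 hx.1]
  rw [Q0, U, volume_annulus hd le_rfl (by linarith), hunion,
    Measure.restrict_union hdisj (measurableSet_annulus _ _ _), withDensity_smul_measure,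
    withDensity_add_measure,
    withDensity_restrict_eq_smul _ Metric.isOpen_ball.measurableSet hb,
    withDensity_restrict_eq_smul _ (measurableSet_annulus _ _ _) ha,
    P0, U_zero_one_eq hd, U, volume_annulus hd zero_le_one (by linarith), smul_add,
    smul_smul, smul_smul, smul_smul, smul_smul, zero_pow (by omega), one_pow, sub_zero]
  set w := volume (Metric.ball (0 : EuclideanSpace ℝ (Fin d)) 1)
  have hw : w ≠ ∞ := measure_ball_lt_top.ne
  have hV0 : 0 < (1 + Δ) ^ d := by linarith
  have hV1 : 0 < (1 + Δ) ^ d - 1 := by linarith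
  rw [ENNReal.mul_inv (.inr hw) (.inl ENNReal.ofReal_ne_top),
    ENNReal.mul_inv (.inr hw) (.inl ENNReal.ofReal_ne_top),
    ← ENNReal.ofReal_inv_of_pos hV0, ← ENNReal.ofReal_inv_of_pos hV1,
    mul_right_comm, mul_right_comm _ w⁻¹, ← mul_assoc (ENNReal.ofReal (1 - l1)),
    ← ENNReal.ofReal_mul (by positivity), ← ENNReal.ofReal_mul (by positivity),
    ← ENNReal.ofReal_mul (by linarith [hl1.2])]
  congr 4 <;> field_simp

lemma joint_P0_P1_apply_le (d : ℕ) (Δ l1 l2 : ℝ) :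
    joint d (P0 d Δ l1) (P1 d l2) (Metric.ball 0 1 ×ˢ {0}) ≤ ENNReal.ofReal l1 := by
  have hs : MeasurableSet
      (Metric.ball (0 : EuclideanSpace ℝ (Fin d)) 1 ×ˢ ({0} : Set (Fin 2))) :=
    Metric.isOpen_ball.measurableSet.prod (measurableSet_singleton _)
  have hU : U d 1 (1 + Δ) (Metric.ball 0 1) = 0 := by
    rw [U, Measure.smul_apply, Measure.restrict_apply Metric.isOpen_ball.measurableSet,
      annulus_eq_diff, Set.inter_sdiff_self]
    simp
  rw [joint, Measure.add_apply, Measure.smul_apply, Measure.smul_apply,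
    Measure.map_apply (by fun_prop) hs, Measure.map_apply (by fun_prop) hs]
  simp only [Set.mk_preimage_prod_left, Set.mem_singleton_iff, Set.mk_preimage_prod_left_eq_empty,
    one_ne_zero, not_false_eq_true, measure_empty, P0, Measure.add_apply,
    Measure.smul_apply, hU, smul_eq_mul, mul_zero, add_zero]
  calc 1 / 2 * (ENNReal.ofReal l1 * U d 0 1 (Metric.ball 0 1))
      ≤ 1 * (ENNReal.ofReal l1 * 1) := by
        gcongr
        · simp
        · exact (measure_mono (Set.subset_univ _)).trans (U_univ_le_one d 0 1)
    _ = ENNReal.ofReal l1 := by simp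

/-- if `λ₁ > 1/(1+Δ)^d` and `λ₁ < ε/(d·log(1+Δ))` then `KL(P ‖ Q) ≤ ε`. -/
theorem stmt6 (ε : ℝ) (hε : 0 < ε) (d : ℕ) (hd : 1 ≤ d) (Δ l1 l2 : ℝ) (hΔ : 0 < Δ)
    (hl1 : l1 ∈ Set.Ioo (0:ℝ) 1) (hl2 : l2 ∈ Set.Ioo (0:ℝ) 1)
    (h1 : 1 / (1 + Δ) ^ d < l1) (h2 : l1 < ε / (d * Real.log (1 + Δ))) :
    klDiv (joint d (P0 d Δ l1) (P1 d l2)) (joint d (Q0 d Δ) (P1 d l2)) ≤ (ε : EReal) := by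
  have hV : 1 < (1 + Δ) ^ d := one_lt_pow₀ (by linarith) (by omega)
  have hV1 : 0 < (1 + Δ) ^ d - 1 := by linarith
  have hlog : 0 < d * Real.log (1 + Δ) :=
    mul_pos (by exact_mod_cast hd) (Real.log_pos (by linarith))
  have hP : (joint d (Q0 d Δ) (P1 d l2)).withDensity
      (fun p => if p.2 = 0 then densP0 d Δ l1 p.1 else 1) = joint d (P0 d Δ l1) (P1 d l2) := by
    rw [joint_withDensity _ _ _ (measurable_densP0 _ _ _), Q0_withDensity hd hΔ hl1]
  have hm : Measurable
      (fun p : EuclideanSpace ℝ (Fin d) × Fin 2 => if p.2 = 0 then densP0 d Δ l1 p.1 else 1) :=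
    Measurable.ite (measurable_snd (measurableSet_singleton 0))
      ((measurable_densP0 _ _ _).comp measurable_fst) measurable_const
  have hac : joint d (P0 d Δ l1) (P1 d l2) ≪ joint d (Q0 d Δ) (P1 d l2) := by
    rw [← hP]
    exact withDensity_absolutelyContinuous _ _
  have hle := joint_P0_P1_apply_le d Δ l1 l2
  have hrn := hac.ae_eq (Measure.rnDeriv_withDensity (joint d (Q0 d Δ) (P1 d l2)) hm)
  rw [hP] at hrn
  rw [klDiv, if_pos hac, EReal.coe_le_coe_iff]
  set P := joint d (P0 d Δ l1) (P1 d l2)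
  set Q := joint d (Q0 d Δ) (P1 d l2)
  set A := Metric.ball (0 : EuclideanSpace ℝ (Fin d)) 1 ×ˢ ({0} : Set (Fin 2)) with hA
  have hAm : MeasurableSet A :=
    Metric.isOpen_ball.measurableSet.prod (measurableSet_singleton _)
  by_cases hint : Integrable (fun x => Real.log (P.rnDeriv Q x).toReal) P
  swap
  · rw [integral_undef hint]
    exact hε.le
  have hbound : (fun x => Real.log (P.rnDeriv Q x).toReal) ≤ᵐ[P]
      A.indicator (fun _ => d * Real.log (1 + Δ)) := by
    filter_upwards [hrn] with ⟨x, i⟩ hx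
    rw [hx]
    by_cases hi : i = 0
    · by_cases hx1 : ‖x‖ < 1
      · have hmem : (x, i) ∈ A := by simp [hA, hi, hx1]
        rw [Set.indicator_of_mem hmem, ← Real.log_pow]
        have hpos : 0 < l1 * (1 + Δ) ^ d := mul_pos hl1.1 (by linarith)
        simp only [hi, if_true, densP0, hx1, ENNReal.toReal_ofReal hpos.le]
        exact Real.log_le_log hpos (mul_le_of_le_one_left (by linarith) hl1.2.le)
      · have hmem : (x, i) ∉ A := by simp [hA, hi, hx1]
        have hnn : 0 ≤ (1 - l1) * (1 + Δ) ^ d / ((1 + Δ) ^ d - 1) :=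
          div_nonneg (mul_nonneg (by linarith [hl1.2]) (by linarith)) hV1.le
        rw [Set.indicator_of_notMem hmem]
        simp only [hi, if_true, densP0, hx1, if_false, ENNReal.toReal_ofReal hnn]
        refine Real.log_nonpos hnn ((div_le_one hV1).2 ?_)
        rw [div_lt_iff₀ (by linarith)] at h1
        linarith
    · have hmem : (x, i) ∉ A := by simp [hA, hi]
      rw [Set.indicator_of_notMem hmem]
      simp [hi]
  have hAtop : P A ≠ ∞ := (hle.trans_lt ENNReal.ofReal_lt_top).ne
  have hAreal : P.real A ≤ l1 := ENNReal.toReal_le_of_le_ofReal hl1.1.le hle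
  calc ∫ x, Real.log (P.rnDeriv Q x).toReal ∂P
      ≤ ∫ x, A.indicator (fun _ => d * Real.log (1 + Δ)) x ∂P :=
        integral_mono_ae hint
          ((integrable_indicator_iff hAm).2 (integrableOn_const hAtop)) hbound
    _ = P.real A * (d * Real.log (1 + Δ)) := by rw [integral_indicator_const _ hAm, smul_eq_mul]
    _ ≤ l1 * (d * Real.log (1 + Δ)) := by gcongr
    _ ≤ ε := ((lt_div_iff₀ hlog).1 h2).le
end
end

section
/- For every ε ∈ (0,1), δ ∈ (0,1/2) and Δ ∈ (0,1), there exist d ∈ ℕ with d ≥ 1 and λ₁, λ₂ ∈ (0,1) such that, with P₀, P₁, Q₀, Q₁ the class-conditional measures and P, Q the joint measures of the counter-example: (i) KL(Q ‖ P) < ε and KL(P ‖ Q) < ε; (ii) P({(x,y) : 1 ≤ ‖x‖ ≤ 1+Δ, y = 0}) ≥ 1/3; (iii) for almost every x with 1 < ‖x‖ < 1+Δ, f_{P₁}(x) = 0 and f_{Q₁}(x) = 0 while f_{P₀}(x) > 0 and f_{Q₀}(x) > 0, so both the data posterior f_{P₀}/(f_{P₀}+f_{P₁}) and the model posterior f_{Q₀}/(f_{Q₀}+f_{Q₁})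 equal 1 there; (iv) for every x with 1 ≤ ‖x‖ ≤ 1+Δ there exists x̄ with ‖x̄‖ ≤ 1 and ‖x − x̄‖ ≤ Δ; (v) for almost every x̄ with ‖x̄‖ < 1, the data posterior of class 0 satisfies f_{P₀}(x̄)/(f_{P₀}(x̄)+f_{P₁}(x̄)) ≥ 1−δ while the model posterior of class 0 satisfies f_{Q₀}(x̄)/(f_{Q₀}(x̄)+f_{Q₁}(x̄)) ≤ δ; and (vi) the model density (1/2)(f_{Q₀}+f_{Q₁}) at almost every point of the open unit ball is at least its value at almost every point of the open annulus {1 < ‖x‖ < 1+Δ}. -/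
open MeasureTheory ProbabilityTheory
open scoped ENNReal

noncomputable section

/-- The measure with density `α` on `s` and `β` on `t` with respect to `m`. -/
def twoStep {E : Type*} [MeasurableSpace E] (m : Measure E) (s t : Set E) (α β : ℝ) :
    Measure E :=
  ENNReal.ofReal α • m.restrict s + ENNReal.ofReal β • m.restrict t

/-- The half-open shell `{x : a < ‖x‖ ≤ b}`. -/
def shell (d : ℕ) (a b : ℝ) : Set (EuclideanSpace ℝ (Fin d)) :=
  Metric.closedBall 0 b \ Metric.closedBall 0 a

lemma mem_shell {d : ℕ} {a b : ℝ} {x : EuclideanSpace ℝ (Fin d)} :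
    x ∈ shell d a b ↔ a < ‖x‖ ∧ ‖x‖ ≤ b := by
  simp [shell, and_comm]

lemma measurableSet_shell (d : ℕ) (a b : ℝ) : MeasurableSet (shell d a b) :=
  measurableSet_closedBall.diff measurableSet_closedBall

section TwoStep

variable {E : Type*} [MeasurableSpace E] {m : Measure E} {s t : Set E} {α β : ℝ}

lemma rnDeriv_twoStep [SigmaFinite m] (hs : MeasurableSet s) (ht : MeasurableSet t)
    (hst : Disjoint s t) (hα : 0 ≤ α) (hβ : 0 ≤ β) :
    ∀ᵐ x ∂m, (x ∈ s → ((twoStep m s t α β).rnDeriv m x).toReal = α) ∧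
      (x ∈ t → ((twoStep m s t α β).rnDeriv m x).toReal = β) ∧
      (x ∉ s → x ∉ t → ((twoStep m s t α β).rnDeriv m x).toReal = 0) := by
  have hg : Measurable (s.indicator (fun _ => ENNReal.ofReal α)
      + t.indicator (fun _ => ENNReal.ofReal β)) :=
    (measurable_const.indicator hs).add (measurable_const.indicator ht)
  have h : twoStep m s t α β = m.withDensity (s.indicator (fun _ => ENNReal.ofReal α)
      + t.indicator (fun _ => ENNReal.ofReal β)) := by
    rw [withDensity_add_left (measurable_const.indicator hs), withDensity_indicator hs,
      withDensity_indicator ht, withDensity_const, withDensity_const, twoStep]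
  rw [h]
  filter_upwards [Measure.rnDeriv_withDensity m hg] with x hx
  rw [hx]
  refine ⟨fun h1 => ?_, fun h1 => ?_, fun h1 h2 => ?_⟩
  · simp [h1, Set.disjoint_left.1 hst h1, hα]
  · simp [h1, Set.disjoint_right.1 hst h1, hβ]
  · simp [h1, h2]

lemma isFiniteMeasure_twoStep (hs : m s ≠ ∞) (ht : m t ≠ ∞) :
    IsFiniteMeasure (twoStep m s t α β) := by
  refine ⟨?_⟩
  simp only [twoStep, Measure.add_apply, Measure.smul_apply, smul_eq_mul,
    Measure.restrict_apply_univ]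
  exact ENNReal.add_lt_top.2 ⟨ENNReal.mul_lt_top ENNReal.ofReal_lt_top hs.lt_top,
    ENNReal.mul_lt_top ENNReal.ofReal_lt_top ht.lt_top⟩

open Classical in
lemma withDensity_twoStep {a b : ℝ} (hs : MeasurableSet s) (ht : MeasurableSet t)
    (hst : Disjoint s t) (hα : 0 ≤ α) (hβ : 0 ≤ β) :
    (twoStep m s t α β).withDensity (fun x => if x ∈ s then ENNReal.ofReal a else ENNReal.ofReal b)
      = twoStep m s t (α * a) (β * b) := by
  have h1 : (m.restrict s).withDensity
      (fun x => if x ∈ s then ENNReal.ofReal a else ENNReal.ofReal b)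
      = ENNReal.ofReal a • m.restrict s := by
    rw [← withDensity_const]
    refine withDensity_congr_ae ?_
    filter_upwards [ae_restrict_mem hs] with x hx
    simp [hx]
  have h2 : (m.restrict t).withDensity
      (fun x => if x ∈ s then ENNReal.ofReal a else ENNReal.ofReal b)
      = ENNReal.ofReal b • m.restrict t := by
    rw [← withDensity_const]
    refine withDensity_congr_ae ?_
    filter_upwards [ae_restrict_mem ht] with x hx
    simp [Set.disjoint_right.1 hst hx]
  rw [twoStep, withDensity_add_measure, withDensity_smul_measure, withDensity_smul_measure, h1, h2,
    twoStep, smul_smul, smul_smul, ENNReal.ofReal_mul hα, ENNReal.ofReal_mul hβ]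

end TwoStep

lemma withDensity_map {E F : Type*} [MeasurableSpace E] [MeasurableSpace F] (μ : Measure E)
    {φ : E → F} (hφ : Measurable φ) {g : F → ℝ≥0∞} (hg : Measurable g) :
    (μ.map φ).withDensity g = (μ.withDensity (g ∘ φ)).map φ := by
  ext u hu
  rw [withDensity_apply _ hu, Measure.map_apply hφ hu, withDensity_apply _ (hφ hu),
    setLIntegral_map hu hg hφ]
  rfl

lemma isFiniteMeasure_joint {d : ℕ} (μ0 μ1 : Measure (EuclideanSpace ℝ (Fin d)))
    [IsFiniteMeasure μ0] [IsFiniteMeasure μ1] : IsFiniteMeasure (joint d μ0 μ1) := by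
  have : IsFiniteMeasure ((1/2 : ℝ≥0∞) • μ0.map (fun x => (x, (0 : Fin 2)))) :=
    Measure.smul_finite _ (by simp)
  have : IsFiniteMeasure ((1/2 : ℝ≥0∞) • μ1.map (fun x => (x, (1 : Fin 2)))) :=
    Measure.smul_finite _ (by simp)
  unfold joint
  infer_instance

open Classical in
lemma klDiv_joint_twoStep {d : ℕ} {s t : Set (EuclideanSpace ℝ (Fin d))} {α β a b : ℝ}
    (ρ : Measure (EuclideanSpace ℝ (Fin d))) [IsFiniteMeasure ρ]
    (hs : MeasurableSet s) (ht : MeasurableSet t) (hst : Disjoint s t)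
    (hs' : volume s ≠ ∞) (ht' : volume t ≠ ∞)
    (hα : 0 ≤ α) (hβ : 0 ≤ β) (ha : 0 ≤ a) (hb : 0 ≤ b) :
    klDiv (joint d (twoStep volume s t (α * a) (β * b)) ρ)
      (joint d (twoStep volume s t α β) ρ)
      = ((1 / 2 * (α * a * volume.real s * Real.log a + β * b * volume.real t * Real.log b) : ℝ)
        : EReal) := by
  set h : EuclideanSpace ℝ (Fin d) → ℝ≥0∞ :=
    fun x => if x ∈ s then ENNReal.ofReal a else ENNReal.ofReal b with hh
  have hhm : Measurable h := Measurable.ite hs measurable_const measurable_const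
  set g : EuclideanSpace ℝ (Fin d) × Fin 2 → ℝ≥0∞ := fun p => if p.2 = 0 then h p.1 else 1 with hg
  have hgm : Measurable g :=
    Measurable.ite (measurable_snd (measurableSet_singleton 0)) (hhm.comp measurable_fst)
      measurable_const
  have hφ (i : Fin 2) : Measurable (fun x : EuclideanSpace ℝ (Fin d) => (x, i)) := by fun_prop
  have : IsFiniteMeasure (twoStep volume s t α β) := isFiniteMeasure_twoStep hs' ht'
  have : IsFiniteMeasure (twoStep volume s t (α * a) (β * b)) := isFiniteMeasure_twoStep hs' ht'
  have := isFiniteMeasure_joint (twoStep volume s t α β) ρ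
  have := isFiniteMeasure_joint (twoStep volume s t (α * a) (β * b)) ρ
  have hdens : joint d (twoStep volume s t (α * a) (β * b)) ρ
      = (joint d (twoStep volume s t α β) ρ).withDensity g := by
    rw [joint, joint, withDensity_add_measure, withDensity_smul_measure, withDensity_smul_measure,
      withDensity_map _ (hφ 0) hgm, withDensity_map _ (hφ 1) hgm]
    have e0 : (g ∘ fun x => (x, (0 : Fin 2))) = h := by ext x; simp [hg]
    have e1 : (g ∘ fun x => (x, (1 : Fin 2))) = 1 := by ext x; simp [hg]
    rw [e0, e1, withDensity_one, hh, withDensity_twoStep hs ht hst hα hβ]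
  have hac : joint d (twoStep volume s t (α * a) (β * b)) ρ ≪ joint d (twoStep volume s t α β) ρ :=
    hdens ▸ withDensity_absolutelyContinuous _ _
  rw [klDiv, if_pos hac]
  congr 1
  have hlogm : Measurable fun p => Real.log (g p).toReal := hgm.ennreal_toReal.log
  have hbd : ∀ p, ‖Real.log (g p).toReal‖ ≤ |Real.log a| + |Real.log b| := by
    intro p
    have h1 := abs_nonneg (Real.log a)
    have h2 := abs_nonneg (Real.log b)
    by_cases hp : p.2 = 0 <;> by_cases hq : p.1 ∈ s <;> simp [hg, hh, hp, hq, ha, hb] <;> linarith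
  have hint (μ : Measure (EuclideanSpace ℝ (Fin d) × Fin 2)) [IsFiniteMeasure μ] :
      Integrable (fun p => Real.log (g p).toReal) μ :=
    Integrable.of_bound hlogm.aestronglyMeasurable _ (Filter.Eventually.of_forall hbd)
  have hint' (μ : Measure (EuclideanSpace ℝ (Fin d))) [IsFiniteMeasure μ] :
      Integrable (fun x => Real.log (h x).toReal) μ :=
    Integrable.of_bound hhm.ennreal_toReal.log.aestronglyMeasurable _
      (Filter.Eventually.of_forall fun x => by simpa [hg] using hbd (x, 0))
  have : IsFiniteMeasure (volume.restrict s) := ⟨by simpa using hs'.lt_top⟩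
  have : IsFiniteMeasure (volume.restrict t) := ⟨by simpa using ht'.lt_top⟩
  have hlog : ∀ᵐ p ∂(joint d (twoStep volume s t (α * a) (β * b)) ρ),
      Real.log ((joint d (twoStep volume s t (α * a) (β * b)) ρ).rnDeriv
        (joint d (twoStep volume s t α β) ρ) p).toReal = Real.log (g p).toReal := by
    refine hac.ae_le ?_
    rw [hdens]
    filter_upwards [Measure.rnDeriv_withDensity (joint d (twoStep volume s t α β) ρ) hgm] with p hp
    rw [hp]
  have is : ∫ x in s, Real.log (h x).toReal = volume.real s * Real.log a := by
    rw [setIntegral_congr_fun (g := fun _ => Real.log a) hs (fun x hx => by simp [hh, hx, ha])]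
    simp
  have it : ∫ x in t, Real.log (h x).toReal = volume.real t * Real.log b := by
    rw [setIntegral_congr_fun (g := fun _ => Real.log b) ht
      (fun x hx => by simp [hh, Set.disjoint_right.1 hst hx, hb])]
    simp
  rw [integral_congr_ae hlog, joint, integral_add_measure ((hint _).smul_measure (by simp))
    ((hint _).smul_measure (by simp)), integral_smul_measure, integral_smul_measure,
    integral_map (hφ 0).aemeasurable hlogm.aestronglyMeasurable,
    integral_map (hφ 1).aemeasurable hlogm.aestronglyMeasurable]
  have e0 (x : EuclideanSpace ℝ (Fin d)) : g (x, 0) = h x := by simp [hg]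
  have e1 (x : EuclideanSpace ℝ (Fin d)) : g (x, 1) = 1 := by simp [hg]
  simp only [e0, e1]
  rw [twoStep, integral_add_measure ((hint' _).smul_measure (by simp))
    ((hint' _).smul_measure (by simp)), integral_smul_measure, integral_smul_measure, is, it,
    ENNReal.toReal_ofReal (mul_nonneg hα ha), ENNReal.toReal_ofReal (mul_nonneg hβ hb)]
  simp
  ring

lemma Cd_pos (d : ℕ) : 0 < Cd d :=
  ENNReal.toReal_pos (Metric.measure_closedBall_pos _ _ one_pos).ne' measure_closedBall_lt_top.ne

lemma volume_closedBall_zero (d : ℕ) {r : ℝ} (hr : 0 ≤ r) :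
    volume (Metric.closedBall (0 : EuclideanSpace ℝ (Fin d)) r) =
      ENNReal.ofReal (r ^ d * Cd d) := by
  rw [Measure.addHaar_closedBall' _ _ hr, finrank_euclideanSpace_fin,
    ENNReal.ofReal_mul (by positivity), Cd, ENNReal.ofReal_toReal measure_closedBall_lt_top.ne]

lemma volume_shell (d : ℕ) {a b : ℝ} (ha : 0 ≤ a) (hab : a ≤ b) :
    volume (shell d a b) = ENNReal.ofReal ((b ^ d - a ^ d) * Cd d) := by
  have := Cd_pos d
  rw [shell, measure_sdiff (Metric.closedBall_subset_closedBall hab)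
    measurableSet_closedBall.nullMeasurableSet measure_closedBall_lt_top.ne,
    volume_closedBall_zero d ha, volume_closedBall_zero d (ha.trans hab),
    ← ENNReal.ofReal_sub _ (by positivity), sub_mul]

lemma U_zero_left (d : ℕ) {b : ℝ} (hb : 0 < b) :
    U d 0 b = ENNReal.ofReal ((b ^ d * Cd d)⁻¹) • volume.restrict (Metric.closedBall 0 b) := by
  have h : annulus d 0 b = Metric.closedBall 0 b := by ext x; simp [annulus]
  have := Cd_pos d
  rw [U, h, volume_closedBall_zero d hb.le, ENNReal.ofReal_inv_of_pos (by positivity)]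

lemma annulus_ae_eq_shell {d : ℕ} {a b : ℝ} (ha : 0 < a) :
    annulus d a b =ᵐ[volume] shell d a b := by
  have hs : volume (Metric.sphere (0 : EuclideanSpace ℝ (Fin d)) a) = 0 :=
    Measure.addHaar_sphere_of_ne_zero _ _ ha.ne'
  filter_upwards [measure_eq_zero_iff_ae_notMem.1 hs] with x hx
  have hx' : a ≠ ‖x‖ := by simpa [eq_comm] using hx
  refine propext ⟨fun h => mem_shell.2 ⟨lt_of_le_of_ne h.1 hx', h.2⟩, fun h => ?_⟩
  exact ⟨(mem_shell.1 h).1.le, (mem_shell.1 h).2⟩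

lemma U_eq_shell {d : ℕ} (hd : d ≠ 0) {a b : ℝ} (ha : 0 < a) (hab : a < b) :
    U d a b = ENNReal.ofReal (((b ^ d - a ^ d) * Cd d)⁻¹) • volume.restrict (shell d a b) := by
  have hlt : a ^ d < b ^ d := pow_lt_pow_left₀ hab ha.le hd
  rw [U, measure_congr (annulus_ae_eq_shell ha),
    Measure.restrict_congr_set (annulus_ae_eq_shell ha),
    volume_shell d ha.le hab.le,
    ENNReal.ofReal_inv_of_pos (mul_pos (sub_pos.2 hlt) (Cd_pos d))]

lemma P0_eq_twoStep {d : ℕ} (hd : d ≠ 0) {Δ l1 : ℝ} (hΔ : 0 < Δ) (hl : 0 ≤ l1) (hl' : l1 ≤ 1) :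
    P0 d Δ l1 = twoStep volume (Metric.closedBall 0 1) (shell d 1 (1 + Δ)) (l1 * (Cd d)⁻¹)
      ((1 - l1) * (((1 + Δ) ^ d - 1) * Cd d)⁻¹) := by
  rw [P0, U_zero_left d one_pos, U_eq_shell hd one_pos (by linarith), smul_smul, smul_smul,
    ← ENNReal.ofReal_mul hl, ← ENNReal.ofReal_mul (sub_nonneg.2 hl'), one_pow, one_mul, twoStep]

lemma P1_eq_twoStep {d : ℕ} (hd : d ≠ 0) {l2 : ℝ} (hl : 0 ≤ l2) (hl' : l2 ≤ 1) :
    P1 d l2 = twoStep volume (Metric.closedBall 0 1) (shell d 2 3) (l2 * (Cd d)⁻¹)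
      ((1 - l2) * ((3 ^ d - 2 ^ d) * Cd d)⁻¹) := by
  rw [P1, U_zero_left d one_pos, U_eq_shell hd two_pos (by norm_num), smul_smul, smul_smul,
    ← ENNReal.ofReal_mul hl, ← ENNReal.ofReal_mul (sub_nonneg.2 hl'), one_pow, one_mul, twoStep]

lemma Q0_eq_twoStep {d : ℕ} {Δ : ℝ} (hΔ : 0 < Δ) :
    Q0 d Δ = twoStep volume (Metric.closedBall 0 1) (shell d 1 (1 + Δ))
      (((1 + Δ) ^ d * Cd d)⁻¹) (((1 + Δ) ^ d * Cd d)⁻¹) := by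
  have h : (Metric.closedBall 0 (1 + Δ) : Set (EuclideanSpace ℝ (Fin d)))
      = Metric.closedBall 0 1 ∪ shell d 1 (1 + Δ) :=
    (Set.union_sdiff_cancel (Metric.closedBall_subset_closedBall (by linarith))).symm
  rw [Q0, U_zero_left d (by linarith), h,
    Measure.restrict_union (t := shell d 1 (1 + Δ)) Set.disjoint_sdiff_right
      (measurableSet_shell d _ _), smul_add, twoStep]

lemma joint_annulus_zero {d : ℕ} (μ0 μ1 : Measure (EuclideanSpace ℝ (Fin d))) (a b : ℝ) :
    joint d μ0 μ1 {p | a ≤ ‖p.1‖ ∧ ‖p.1‖ ≤ b ∧ p.2 = 0} = 1 / 2 * μ0 (annulus d a b) := by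
  have hm : MeasurableSet
      {p : EuclideanSpace ℝ (Fin d) × Fin 2 | a ≤ ‖p.1‖ ∧ ‖p.1‖ ≤ b ∧ p.2 = 0} :=
    (measurableSet_le measurable_const measurable_fst.norm).inter
      ((measurableSet_le measurable_fst.norm measurable_const).inter
        (measurable_snd (measurableSet_singleton 0)))
  rw [joint, Measure.add_apply, Measure.smul_apply, Measure.smul_apply,
    Measure.map_apply (by fun_prop) hm, Measure.map_apply (by fun_prop) hm]
  simp [annulus]

lemma mul_log_div_add_le_of_lt {q l : ℝ} (hq : 0 < q) (hql : q < l) (hl : l < 1 / 3) :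
    1 / 2 * (q * Real.log (q / l) + (1 - q) * Real.log ((1 - q) / (1 - l))) ≤ l := by
  have hl0 : 0 < l := hq.trans hql
  have hl1 : 0 < 1 - l := by linarith
  have hq1 : 0 < 1 - q := by linarith
  have hlog1 : Real.log (q / l) ≤ 0 :=
    Real.log_nonpos (by positivity) ((div_le_one hl0).2 hql.le)
  have hlog2 : Real.log ((1 - q) / (1 - l)) ≤ 3 / 2 * l := by
    refine (Real.log_le_sub_one_of_pos (by positivity)).trans ?_
    rw [sub_le_iff_le_add, div_le_iff₀ hl1]
    nlinarith
  have hm1 := mul_nonpos_of_nonneg_of_nonpos hq.le hlog1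
  have hm2 := mul_le_mul_of_nonneg_left hlog2 hq1.le
  nlinarith [mul_pos hq hl0]

lemma mul_log_div_add_le_mul_div {q l : ℝ} (hq : 0 < q) (hql : q < l) (hl : l < 1) :
    1 / 2 * (l * Real.log (l / q) + (1 - l) * Real.log ((1 - l) / (1 - q))) ≤ l * (l / q) := by
  have hl0 : 0 < l := hq.trans hql
  have hl1 : 0 < 1 - l := by linarith
  have hq1 : 0 < 1 - q := by linarith
  have hlog1 : Real.log (l / q) ≤ l / q :=
    (Real.log_le_sub_one_of_pos (by positivity)).trans (by linarith)
  have hlog2 : Real.log ((1 - l) / (1 - q)) ≤ 0 :=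
    Real.log_nonpos (by positivity) ((div_le_one hq1).2 (by linarith))
  have hm1 := mul_le_mul_of_nonneg_left hlog1 hl0.le
  have hm2 := mul_nonpos_of_nonneg_of_nonpos hl1.le hlog2
  have hm3 : 0 < l * (l / q) := by positivity
  linarith

lemma exists_closedBall_near {d : ℕ} {Δ : ℝ} (x : EuclideanSpace ℝ (Fin d))
    (h1 : 1 ≤ ‖x‖) (h2 : ‖x‖ ≤ 1 + Δ) :
    ∃ y : EuclideanSpace ℝ (Fin d), ‖y‖ ≤ 1 ∧ ‖x - y‖ ≤ Δ := by
  have hx : 0 < ‖x‖ := by linarith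
  refine ⟨‖x‖⁻¹ • x, ?_, ?_⟩
  · rw [norm_smul, norm_inv, norm_norm, inv_mul_cancel₀ hx.ne']
  · have : x - ‖x‖⁻¹ • x = (1 - ‖x‖⁻¹) • x := by rw [sub_smul, one_smul]
    rw [this, norm_smul, Real.norm_of_nonneg (sub_nonneg.2 (inv_le_one_of_one_le₀ h1)), sub_mul,
      inv_mul_cancel₀ hx.ne']
    linarith

/-- the main proposition of the counter-example. For every `ε ∈ (0,1)`,
`δ ∈ (0,1/2)`, `Δ ∈ (0,1)` there are `d ≥ 1` and `λ₁, λ₂ ∈ (0,1)` such that the model `Q`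
is `ε`-close to the data `P` in both KL directions, yet a third of the joint mass consists
of points in the annulus, correctly and confidently classified (as class 0) by both data
and model, each of which can be moved by at most `Δ` into the unit ball where the model
confidently predicts class 1 while the ground truth remains class 0, without decreasing
the model density (here `Q₁ = P₁`). -/
theorem stmt16 (ε δ Δ : ℝ) (hε : ε ∈ Set.Ioo (0:ℝ) 1) (hδ : δ ∈ Set.Ioo (0:ℝ) (1/2))
    (hΔ : Δ ∈ Set.Ioo (0:ℝ) 1) :
    ∃ (d : ℕ) (l1 l2 : ℝ), 1 ≤ d ∧ l1 ∈ Set.Ioo (0:ℝ) 1 ∧ l2 ∈ Set.Ioo (0:ℝ) 1 ∧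
      -- (i) two-sided KL closeness
      klDiv (joint d (Q0 d Δ) (P1 d l2)) (joint d (P0 d Δ l1) (P1 d l2)) < (ε : EReal) ∧
      klDiv (joint d (P0 d Δ l1) (P1 d l2)) (joint d (Q0 d Δ) (P1 d l2)) < (ε : EReal) ∧
      -- (ii) the attackable set has probability at least 1/3
      (1/3 : ℝ≥0∞) ≤ joint d (P0 d Δ l1) (P1 d l2)
          {p : EuclideanSpace ℝ (Fin d) × Fin 2 | 1 ≤ ‖p.1‖ ∧ ‖p.1‖ ≤ 1 + Δ ∧ p.2 = 0} ∧
      -- (iii) on the open annulus, f_{P₁} = f_{Q₁} = 0 while f_{P₀}, f_{Q₀} > 0, so both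
      -- posteriors of class 0 equal 1 (here Q₁ = P₁)
      (∀ᵐ x ∂(volume : Measure (EuclideanSpace ℝ (Fin d))), 1 < ‖x‖ → ‖x‖ < 1 + Δ →
        f d (P1 d l2) x = 0 ∧ 0 < f d (P0 d Δ l1) x ∧ 0 < f d (Q0 d Δ) x ∧
        f d (P0 d Δ l1) x / (f d (P0 d Δ l1) x + f d (P1 d l2) x) = 1 ∧
        f d (Q0 d Δ) x / (f d (Q0 d Δ) x + f d (P1 d l2) x) = 1) ∧
      -- (iv) every point of the annulus is Δ-close to the closed unit ball
      (∀ x : EuclideanSpace ℝ (Fin d), 1 ≤ ‖x‖ → ‖x‖ ≤ 1 + Δ →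
        ∃ xbar : EuclideanSpace ℝ (Fin d), ‖xbar‖ ≤ 1 ∧ ‖x - xbar‖ ≤ Δ) ∧
      -- (v) on the unit ball the data posterior of class 0 is ≥ 1−δ while the model
      -- posterior of class 0 is ≤ δ
      (∀ᵐ x ∂(volume : Measure (EuclideanSpace ℝ (Fin d))), ‖x‖ < 1 →
        1 - δ ≤ f d (P0 d Δ l1) x / (f d (P0 d Δ l1) x + f d (P1 d l2) x) ∧
        f d (Q0 d Δ) x / (f d (Q0 d Δ) x + f d (P1 d l2) x) ≤ δ) ∧
      -- (vi) the model density on the unit ball dominates that on the annulus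
      (∀ᵐ x ∂(volume : Measure (EuclideanSpace ℝ (Fin d))),
        ∀ᵐ y ∂(volume : Measure (EuclideanSpace ℝ (Fin d))),
          ‖x‖ < 1 → 1 < ‖y‖ → ‖y‖ < 1 + Δ →
          1/2 * (f d (Q0 d Δ) y + f d (P1 d l2) y)
            ≤ 1/2 * (f d (Q0 d Δ) x + f d (P1 d l2) x)) := by
  obtain ⟨hε0, hε1⟩ := hε
  obtain ⟨hδ0, hδ1⟩ := hδ
  obtain ⟨hΔ0, hΔ1⟩ := hΔ
  obtain ⟨k, hk⟩ : ∃ k, k = (1 - δ) / δ := ⟨_, rfl⟩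
  have hk1 : 1 < k := by rw [hk, lt_div_iff₀ hδ0]; linarith
  have hkδ : δ * (1 + k) = 1 := by rw [hk]; field_simp; ring
  have hK : 0 < k ^ 2 * (k ^ 2 + 3) := by positivity
  obtain ⟨d, hd⟩ := exists_pow_lt_of_lt_one (div_pos hε0 hK)
    (show (1 + Δ)⁻¹ < 1 from inv_lt_one_of_one_lt₀ (by linarith))
  rw [inv_pow, lt_div_iff₀ hK] at hd
  have hR0 : 0 < (1 + Δ) ^ d := by positivity
  have hd0 : d ≠ 0 := by
    rintro rfl
    norm_num at hd
    nlinarith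
  have hR1 : 1 < (1 + Δ) ^ d := one_lt_pow₀ (by linarith) hd0
  obtain ⟨q, hq⟩ : ∃ q, q = ((1 + Δ) ^ d)⁻¹ := ⟨_, rfl⟩
  have hq0 : 0 < q := hq ▸ inv_pos.2 hR0
  rw [← hq] at hd
  have hkk : k < k ^ 2 := by nlinarith
  have hk2 : 1 < k ^ 2 := by linarith
  obtain ⟨l1, hl1⟩ : ∃ l, l = k ^ 2 * q := ⟨_, rfl⟩
  obtain ⟨l2, hl2⟩ : ∃ l, l = k * q := ⟨_, rfl⟩
  have hl2q : q < l2 := by rw [hl2]; nlinarith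
  have hl12 : l2 < l1 := by rw [hl1, hl2]; exact mul_lt_mul_of_pos_right hkk hq0
  have hbound : l1 * k ^ 2 + 3 * l1 < ε := by rw [hl1]; linarith
  have hl1k : 0 < l1 * k ^ 2 := by rw [hl1]; positivity
  have hl1third : l1 < 1 / 3 := by linarith
  have hl1p : 0 < l1 := by linarith
  have hl1n : 0 < 1 - l1 := by linarith
  have hv : 0 < Cd d := Cd_pos d
  have hw : 0 < ((1 + Δ) ^ d - 1) * Cd d := mul_pos (sub_pos.2 hR1) hv
  have h32 : (0 : ℝ) < (3 ^ d - 2 ^ d) * Cd d :=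
    mul_pos (sub_pos.2 (pow_lt_pow_left₀ (by norm_num) (by norm_num) hd0)) hv
  have hB : MeasurableSet (Metric.closedBall (0 : EuclideanSpace ℝ (Fin d)) 1) :=
    measurableSet_closedBall
  have hA := measurableSet_shell d 1 (1 + Δ)
  have hBA : Disjoint (Metric.closedBall 0 1) (shell d 1 (1 + Δ)) := Set.disjoint_sdiff_right
  have hBC : Disjoint (Metric.closedBall 0 1) (shell d 2 3) := by
    refine Set.disjoint_left.2 fun x hx hx' => ?_
    have h1 : ‖x‖ ≤ 1 := by simpa using hx
    have h2 := (mem_shell.1 hx').1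
    linarith
  have hvA : volume (shell d 1 (1 + Δ)) = ENNReal.ofReal (((1 + Δ) ^ d - 1) * Cd d) := by
    rw [volume_shell d zero_le_one (by linarith), one_pow]
  have hvB : volume (Metric.closedBall (0 : EuclideanSpace ℝ (Fin d)) 1)
      = ENNReal.ofReal (Cd d) := by
    rw [volume_closedBall_zero d zero_le_one, one_pow, one_mul]
  have hrA : volume.real (shell d 1 (1 + Δ)) = ((1 + Δ) ^ d - 1) * Cd d := by
    rw [Measure.real, hvA, ENNReal.toReal_ofReal hw.le]
  have hrB : volume.real (Metric.closedBall (0 : EuclideanSpace ℝ (Fin d)) 1) = Cd d := rfl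
  have hAtop : volume (shell d 1 (1 + Δ)) ≠ ∞ := by simp [hvA]
  have hBtop : volume (Metric.closedBall (0 : EuclideanSpace ℝ (Fin d)) 1) ≠ ∞ := by simp [hvB]
  have hP0 := P0_eq_twoStep hd0 hΔ0 (l1 := l1) (by linarith) (by linarith)
  have hP1 := P1_eq_twoStep hd0 (l2 := l2) (by linarith) (by linarith)
  have hQ0 := Q0_eq_twoStep (d := d) hΔ0
  have hα : 0 < l1 * (Cd d)⁻¹ := mul_pos (by linarith) (inv_pos.2 hv)
  have hβ : 0 < (1 - l1) * (((1 + Δ) ^ d - 1) * Cd d)⁻¹ := mul_pos (by linarith) (inv_pos.2 hw)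
  have hγ : 0 < ((1 + Δ) ^ d * Cd d)⁻¹ := inv_pos.2 (mul_pos hR0 hv)
  have hγq : ((1 + Δ) ^ d * Cd d)⁻¹ = q * (Cd d)⁻¹ := by rw [mul_inv, hq]
  have hα2 : 0 < l2 * (Cd d)⁻¹ := mul_pos (by linarith) (inv_pos.2 hv)
  have hβ2 : 0 < (1 - l2) * ((3 ^ d - 2 ^ d) * Cd d)⁻¹ := mul_pos (by linarith) (inv_pos.2 h32)
  have hRq : (1 + Δ) ^ d = q⁻¹ := by rw [hq, inv_inv]
  have hfinP1 : IsFiniteMeasure (P1 d l2) := by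
    rw [hP1]
    exact isFiniteMeasure_twoStep hBtop
      (by simp [volume_shell d zero_le_two (b := 3) (by norm_num)])
  have hq1 : q < 1 := by linarith
  have hqn : 0 < 1 - q := by linarith
  have hwq : (((1 + Δ) ^ d - 1) * Cd d)⁻¹ = q * (Cd d)⁻¹ / (1 - q) := by
    rw [hRq]; field_simp
  have hdP0 := rnDeriv_twoStep (m := volume) hB hA hBA hα.le hβ.le
  have hdQ0 := rnDeriv_twoStep (m := volume) hB hA hBA hγ.le hγ.le
  have hdP1 := rnDeriv_twoStep (m := volume) hB (measurableSet_shell d 2 3) hBC hα2.le hβ2.le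
  rw [← hP0] at hdP0
  rw [← hP1] at hdP1
  rw [← hQ0] at hdQ0
  have hball : ∀ᵐ x ∂(volume : Measure (EuclideanSpace ℝ (Fin d))), ‖x‖ < 1 →
      f d (P0 d Δ l1) x = l1 * (Cd d)⁻¹ ∧ f d (P1 d l2) x = l2 * (Cd d)⁻¹ ∧
      f d (Q0 d Δ) x = q * (Cd d)⁻¹ := by
    filter_upwards [hdP0, hdP1, hdQ0] with x h0 h1 h2 hx
    have hx' : x ∈ Metric.closedBall 0 1 := by simpa using hx.le
    exact ⟨h0.1 hx', h1.1 hx', (h2.1 hx').trans hγq⟩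
  have hann : ∀ᵐ x ∂(volume : Measure (EuclideanSpace ℝ (Fin d))), 1 < ‖x‖ → ‖x‖ < 1 + Δ →
      f d (P0 d Δ l1) x = (1 - l1) * (((1 + Δ) ^ d - 1) * Cd d)⁻¹ ∧ f d (P1 d l2) x = 0 ∧
      f d (Q0 d Δ) x = q * (Cd d)⁻¹ := by
    filter_upwards [hdP0, hdP1, hdQ0] with x h0 h1 h2 hx hx2
    have hx' : x ∈ shell d 1 (1 + Δ) := mem_shell.2 ⟨hx, hx2.le⟩
    refine ⟨h0.2.1 hx', h1.2.2 (by simpa using hx) fun h => ?_, (h2.2.1 hx').trans hγq⟩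
    linarith [(mem_shell.1 h).1]
  have hqv : 0 < q * (Cd d)⁻¹ := mul_pos hq0 (inv_pos.2 hv)
  refine ⟨d, l1, l2, Nat.one_le_iff_ne_zero.2 hd0, ⟨by linarith, by linarith⟩,
    ⟨by linarith, by linarith⟩, ?_, ?_, ?_, ?_, exists_closedBall_near, ?_, ?_⟩
  · have e1 : ((1 + Δ) ^ d * Cd d)⁻¹ = l1 * (Cd d)⁻¹ * (q / l1) := by
      rw [hγq]; field_simp [hl1p.ne']
    have e2 : ((1 + Δ) ^ d * Cd d)⁻¹
        = (1 - l1) * (((1 + Δ) ^ d - 1) * Cd d)⁻¹ * ((1 - q) / (1 - l1)) := by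
      rw [hγq, hwq]; field_simp
    have hQ0' : Q0 d Δ = twoStep volume (Metric.closedBall 0 1) (shell d 1 (1 + Δ))
        (l1 * (Cd d)⁻¹ * (q / l1))
        ((1 - l1) * (((1 + Δ) ^ d - 1) * Cd d)⁻¹ * ((1 - q) / (1 - l1))) := by
      rw [← e1, ← e2, hQ0]
    rw [hQ0', hP0, klDiv_joint_twoStep _ hB hA hBA hBtop hAtop hα.le hβ.le
      (div_nonneg hq0.le (by linarith)) (div_nonneg (by linarith) (by linarith)), hrA, hrB,
      EReal.coe_lt_coe_iff]
    have c1 : l1 * (Cd d)⁻¹ * (q / l1) * Cd d = q := by field_simp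
    have c2 : (1 - l1) * (((1 + Δ) ^ d - 1) * Cd d)⁻¹ * ((1 - q) / (1 - l1))
        * (((1 + Δ) ^ d - 1) * Cd d) = 1 - q := by
      rw [← e2, hγq, hRq]; field_simp
    rw [c1, c2]
    exact (mul_log_div_add_le_of_lt hq0 (by linarith) hl1third).trans_lt (by linarith)
  · have e1 : l1 * (Cd d)⁻¹ = ((1 + Δ) ^ d * Cd d)⁻¹ * (l1 / q) := by
      rw [hγq]; field_simp
    have e2 : (1 - l1) * (((1 + Δ) ^ d - 1) * Cd d)⁻¹
        = ((1 + Δ) ^ d * Cd d)⁻¹ * ((1 - l1) / (1 - q)) := by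
      rw [hγq, hwq]; field_simp
    have hP0' : P0 d Δ l1 = twoStep volume (Metric.closedBall 0 1) (shell d 1 (1 + Δ))
        (((1 + Δ) ^ d * Cd d)⁻¹ * (l1 / q)) (((1 + Δ) ^ d * Cd d)⁻¹ * ((1 - l1) / (1 - q))) := by
      rw [← e1, ← e2, hP0]
    rw [hP0', hQ0, klDiv_joint_twoStep _ hB hA hBA hBtop hAtop hγ.le hγ.le
      (div_nonneg (by linarith) hq0.le) (div_nonneg (by linarith) (by linarith)), hrA, hrB,
      EReal.coe_lt_coe_iff]
    rw [← e1, ← e2, inv_mul_cancel_right₀ hv.ne', inv_mul_cancel_right₀ hw.ne']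
    have hlk : l1 * (l1 / q) = l1 * k ^ 2 := by rw [hl1, mul_div_cancel_right₀ _ hq0.ne']
    exact (mul_log_div_add_le_mul_div hq0 (by linarith) (by linarith)).trans_lt (by linarith)
  · rw [joint_annulus_zero]
    have hshell : shell d 1 (1 + Δ) ⊆ annulus d 1 (1 + Δ) := fun x hx =>
      ⟨(mem_shell.1 hx).1.le, (mem_shell.1 hx).2⟩
    have h1 : ENNReal.ofReal (1 - l1) ≤ P0 d Δ l1 (annulus d 1 (1 + Δ)) := by
      refine le_trans ?_ (measure_mono hshell)
      rw [hP0, twoStep, Measure.add_apply, Measure.smul_apply, Measure.smul_apply,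
        Measure.restrict_apply_self, smul_eq_mul, smul_eq_mul, hvA, ← ENNReal.ofReal_mul hβ.le,
        mul_assoc, inv_mul_cancel₀ hw.ne', mul_one]
      exact le_add_self
    have h2 : (1 / 3 : ℝ≥0∞) = 1 / 2 * ENNReal.ofReal (2 / 3) := by
      rw [← ENNReal.toReal_eq_toReal_iff' (by simp) (ENNReal.mul_ne_top (by simp) (by simp)),
        ENNReal.toReal_mul, ENNReal.toReal_ofReal (by norm_num)]
      norm_num
    rw [h2]
    gcongr
    exact (ENNReal.ofReal_le_ofReal (by linarith)).trans h1
  · filter_upwards [hann] with x hx h1 h2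
    obtain ⟨hp0, hp1, hq0'⟩ := hx h1 h2
    rw [hp0, hp1, hq0', add_zero, add_zero, div_self hβ.ne', div_self hqv.ne']
    exact ⟨rfl, hβ, hqv, rfl, rfl⟩
  · filter_upwards [hball] with x hx h1
    obtain ⟨hp0, hp1, hq0'⟩ := hx h1
    rw [hp0, hp1, hq0', ← add_mul, ← add_mul, mul_div_mul_right _ _ (inv_pos.2 hv).ne',
      mul_div_mul_right _ _ (inv_pos.2 hv).ne']
    have hs1 : 0 < l1 + l2 := by linarith
    have hs2 : 0 < q + l2 := by linarith
    have hδk : δ * k = 1 - δ := by linarith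
    have hl1' : l1 = k * l2 := by rw [hl1, hl2]; ring
    constructor
    · rw [le_div_iff₀ hs1, hl1', ← hδk]
      refine le_of_eq ?_
      linear_combination (k * l2) * hkδ
    · rw [div_le_iff₀ hs2, hl2]
      refine le_of_eq ?_
      linear_combination -q * hkδ
  · filter_upwards [hball] with x hx
    filter_upwards [hann] with y hy h1 h2 h3
    obtain ⟨-, hp1, hq0'⟩ := hx h1
    obtain ⟨-, hp1', hq0''⟩ := hy h2 h3
    rw [hp1, hq0', hp1', hq0'']
    linarith
end
end
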